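/- arXiv:2312.17126 — 2 statements merged into one kernel-verified Lean document; each statement's English description precedes it below -/
import Mathlib

section
/- Let d = 2k+3 and let Γ^0, …, Γ^{2k+2} be complex n × n matrices (n ≥ 1) satisfying the Lorentz Clifford relations such that Γ^{2k+2} = i^{k+1} Γ^0 Γ^1 ⋯ Γ^{2k+1}. If M is an invertible matrix with M conj(Γ^μ) M^{−1} = −Γ^μ for all μ = 0, 1, …, 2k+1, then necessarily M conj(Γ^{2k+2}) M^{−1} = (−1)^{k+1} Γ^{2k+2}. Consequently, when k is odd there is no invertible matrix M satisfying M conj(Γ^μ) M^{−1} = −Γ^μ for all μ = 0, 1, …, 2k+2 (i.e. the Dirac mass term breaks charge conjugation C in spacetime dimensions d ≡ 1 mod 4). -/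
/-!
Entrywise conjugation followed by conjugation by `M` is a ring homomorphism, so it fixes a product
of an even number of matrices each of which it negates. Since it is also conjugate-linear, its only
effect on `Γ^{2k+2} = i^{k+1} Γ^0 ⋯ Γ^{2k+1}` is to replace `i^{k+1}` by its conjugate
`(-1)^{k+1} i^{k+1}`. For odd `k` the matrix `Γ^{2k+2}` is therefore fixed, and it cannot also be
negated because a Clifford generator squares to `±1` and hence is nonzero.
-/

open Matrix

/-- Complex square matrices `Γ^0, …, Γ^{d-1}` satisfy the Lorentz Clifford relations if
`Γ^μ Γ^ν + Γ^ν Γ^μ = 2 η^{μν} I` where `η = diag(+1, -1, …, -1)`. -/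
def LorentzClifford {α : Type*} [Fintype α] [DecidableEq α] (d : ℕ)
    (Γ : ℕ → Matrix α α ℂ) : Prop :=
  ∀ μ < d, ∀ ν < d, Γ μ * Γ ν + Γ ν * Γ μ =
    if μ = ν then (if μ = 0 then (2 : ℂ) else (-2 : ℂ)) • 1 else 0

theorem LorentzClifford.mul_self {α : Type*} [Fintype α] [DecidableEq α] {d : ℕ}
    {Γ : ℕ → Matrix α α ℂ} (hΓ : LorentzClifford d Γ) {μ : ℕ} (hμ : μ < d) :
    Γ μ * Γ μ = if μ = 0 then 1 else -1 := by
  have h := hΓ μ hμ μ hμ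
  rw [if_pos rfl, ← two_smul ℂ] at h
  apply smul_right_injective _ (two_ne_zero (α := ℂ))
  split_ifs at h ⊢ <;> simpa using h

theorem LorentzClifford.ne_zero {α : Type*} [Fintype α] [DecidableEq α] [Nonempty α] {d : ℕ}
    {Γ : ℕ → Matrix α α ℂ} (hΓ : LorentzClifford d Γ) {μ : ℕ} (hμ : μ < d) : Γ μ ≠ 0 := by
  intro h
  have h_sq := hΓ.mul_self hμ
  rw [h, mul_zero] at h_sq
  split_ifs at h_sq <;> simp at h_sq

theorem map_list_prod_of_map_eq_neg {R F : Type*} [Monoid R] [HasDistribNeg R] [FunLike F R R]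
    [MonoidHomClass F R R] (f : F) {l : List R} (h : ∀ x ∈ l, f x = -x) :
    f l.prod = (-1) ^ l.length * l.prod := by
  rw [map_list_prod, List.map_congr_left h]
  exact l.prod_map_neg

section TwistedConj

variable {α R : Type*} [Fintype α] [DecidableEq α] [CommRing R] [StarRing R]

/-- The twisted conjugation `X ↦ M * conj X * M⁻¹` by an invertible matrix `M`, through which charge
conjugation acts on the gamma matrices. It is bundled as a ring homomorphism, and `M` is taken to be
a unit so that `M⁻¹` is a genuine inverse. -/
def twistedConj (M : (Matrix α α R)ˣ) : Matrix α α R →+* Matrix α α R :=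
  (MulSemiringAction.toRingHom _ _ (ConjAct.toConjAct M)).comp (starRingEnd R).mapMatrix

theorem twistedConj_apply (M : (Matrix α α R)ˣ) (X : Matrix α α R) :
    twistedConj M X = M * X.map (starRingEnd R) * (M : Matrix α α R)⁻¹ := by
  simp [twistedConj, ConjAct.units_smul_def]

theorem twistedConj_smul (M : (Matrix α α R)ˣ) (c : R) (X : Matrix α α R) :
    twistedConj M (c • X) = starRingEnd R c • twistedConj M X := by
  rw [twistedConj_apply, Matrix.map_smul' _ _ _ (map_mul _), mul_smul_comm, smul_mul_assoc,
    twistedConj_apply]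

theorem twistedConj_smul_list_prod (M : (Matrix α α R)ˣ) (c : R) {l : List (Matrix α α R)}
    (hl : Even l.length) (h : ∀ X ∈ l, twistedConj M X = -X) :
    twistedConj M (c • l.prod) = starRingEnd R c • l.prod := by
  rw [twistedConj_smul, map_list_prod_of_map_eq_neg _ h, hl.neg_one_pow, one_mul]

end TwistedConj

theorem conj_I_pow (m : ℕ) : starRingEnd ℂ (Complex.I ^ m) = (-1) ^ m * Complex.I ^ m := by
  rw [map_pow, Complex.conj_I, neg_pow]

theorem mass_breaks_C_odd_d_general {α : Type*} [Fintype α] [DecidableEq α] {k : ℕ}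
    (Γ : ℕ → Matrix α α ℂ)
    (hlast : Γ (2 * k + 2) = Complex.I ^ (k + 1) • ((List.range (2 * k + 2)).map Γ).prod) :
    (∀ M : Matrix α α ℂ, IsUnit M →
      (∀ μ < 2 * k + 2, M * (Γ μ).map (starRingEnd ℂ) * M⁻¹ = -(Γ μ)) →
      M * (Γ (2 * k + 2)).map (starRingEnd ℂ) * M⁻¹ = ((-1 : ℂ) ^ (k + 1)) • Γ (2 * k + 2)) ∧
    (Odd k → Γ (2 * k + 2) ≠ 0 → ¬ ∃ M : Matrix α α ℂ, IsUnit M ∧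
      ∀ μ < 2 * k + 3, M * (Γ μ).map (starRingEnd ℂ) * M⁻¹ = -(Γ μ)) := by
  have map_last (M : Matrix α α ℂ) (hM : IsUnit M)
      (h : ∀ μ < 2 * k + 2, M * (Γ μ).map (starRingEnd ℂ) * M⁻¹ = -(Γ μ)) :
      M * (Γ (2 * k + 2)).map (starRingEnd ℂ) * M⁻¹ =
        ((-1 : ℂ) ^ (k + 1)) • Γ (2 * k + 2) := by
    obtain ⟨M, rfl⟩ := hM
    simp only [← twistedConj_apply] at h ⊢
    have h_even : Even ((List.range (2 * k + 2)).map Γ).length := by simp [parity_simps]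
    rw [hlast, twistedConj_smul_list_prod M _ h_even (by simpa using h), conj_I_pow, mul_smul]
  refine ⟨map_last, fun hk hne ⟨M, hM, h⟩ ↦ hne ?_⟩
  have h_fixed := map_last M hM fun μ hμ ↦ h μ (by lia)
  rw [h (2 * k + 2) (by lia), hk.add_one.neg_one_pow, one_smul] at h_fixed
  have : IsAddTorsionFree (Matrix α α ℂ) := .of_module_rat _
  exact neg_eq_self.mp h_fixed

/-- For odd `d = 2k+3` with `Γ^{2k+2} = i^{k+1} Γ^0 ⋯ Γ^{2k+1}`: any invertible `M` with
`M conj(Γ^μ) M⁻¹ = -Γ^μ` for `μ ≤ 2k+1` necessarily satisfies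
`M conj(Γ^{2k+2}) M⁻¹ = (-1)^{k+1} Γ^{2k+2}`; hence for odd `k` no invertible `M`
satisfies `M conj(Γ^μ) M⁻¹ = -Γ^μ` for all `μ ≤ 2k+2` (the Dirac mass term breaks
charge conjugation `C` in spacetime dimensions `d ≡ 1 mod 4`). -/
theorem mass_breaks_C_odd_d {n k : ℕ} (hn : 1 ≤ n)
    (Γ : ℕ → Matrix (Fin n) (Fin n) ℂ)
    (hΓ : LorentzClifford (2 * k + 3) Γ)
    (hlast : Γ (2 * k + 2) = Complex.I ^ (k + 1) • ((List.range (2 * k + 2)).map Γ).prod) :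
    (∀ M : Matrix (Fin n) (Fin n) ℂ, IsUnit M →
      (∀ μ < 2 * k + 2, M * (Γ μ).map (starRingEnd ℂ) * M⁻¹ = -(Γ μ)) →
      M * (Γ (2 * k + 2)).map (starRingEnd ℂ) * M⁻¹ = ((-1 : ℂ) ^ (k + 1)) • Γ (2 * k + 2)) ∧
    (Odd k → ¬ ∃ M : Matrix (Fin n) (Fin n) ℂ, IsUnit M ∧
      ∀ μ < 2 * k + 3, M * (Γ μ).map (starRingEnd ℂ) * M⁻¹ = -(Γ μ)) := by
  have : Nonempty (Fin n) := ⟨⟨0, hn⟩⟩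
  obtain ⟨h_last, h_odd⟩ := mass_breaks_C_odd_d_general Γ hlast
  exact ⟨h_last, fun hk ↦ h_odd hk (hΓ.ne_zero (by lia))⟩
end

section
/- Let k be odd and let Γ^0, …, Γ^{2k+1} be complex n × n matrices satisfying the Lorentz Clifford relations (in 2k+2 generators) and the chiral reality pattern. Then M := Γ^1 Γ^3 ⋯ Γ^{2k+1} (the product of all odd-index Gamma matrices) is invertible, satisfies M conj(Γ^0) M^{−1} = Γ^0 and M conj(Γ^j) M^{−1} = −Γ^j for j = 1, …, 2k+1, and conj(M) · M = (−1)^{(k+1)(k+2)/2} I. Moreover, if additionally a matrix Γ^{2k+2} = i^{k+1} Γ^0 Γ^1 ⋯ Γ^{2k+1} is appended (the odd-dimensional case d = 2k+3), then also M conj(Γ^{2k+2}) M^{−1} = −Γ^{2k+2}. (This M is the time-reversal matrix M_T, and conj(M)·M computes T^2 on a Dirac fermion.) -/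
/-!
The factors of `M = Γ^1 Γ^3 ⋯ Γ^{2k+1}` anticommute pairwise, so moving `Γ^j` through `M` only
costs a sign: `(-1)^{k+1}` for even `j`, and `(-1)^k` for odd `j`, where one factor is `Γ^j`
itself. Conjugation contributes a further sign exactly for even `j ≥ 2`, so that `M conj(Γ^j) =
(-1)^k Γ^j M` for all `j ≥ 1`, while the real `Γ^0` picks up the opposite sign. These relations
multiply along `Γ^0 ⋯ Γ^{2k+1}`: the `2k+2` signs `(-1)^k` cancel and only the extra `-1` from
`Γ^0` survives; conjugating the prefactor `i^{k+1}` multiplies it by `(-1)^{k+1}`. As `M` is real,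
`conj(M) M = M²`, and reordering the factors of `M²` leaves the product of their squares up to
sign.
-/

open Matrix

/-- The chiral reality pattern: `Γ^0` is real, `Γ^j` is real for odd `j`, and `Γ^j` is
imaginary for even `j ≥ 2` (here `conj` is the entrywise complex conjugate). -/
def ChiralReality {α : Type*} [Fintype α] [DecidableEq α] (d : ℕ)
    (Γ : ℕ → Matrix α α ℂ) : Prop :=
  (Γ 0).map (starRingEnd ℂ) = Γ 0 ∧
  (∀ j, 1 ≤ j → j < d → j % 2 = 1 → (Γ j).map (starRingEnd ℂ) = Γ j) ∧
  (∀ j, 1 ≤ j → j < d → j % 2 = 0 → (Γ j).map (starRingEnd ℂ) = -(Γ j))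

theorem semiconjBy_list_prod_map {R ι : Type*} [Monoid R] {a : R} {f g : ι → R} {l : List ι}
    (h : ∀ i ∈ l, SemiconjBy a (f i) (g i)) :
    SemiconjBy a (l.map f).prod (l.map g).prod := by
  induction l with
  | nil => exact SemiconjBy.one_right a
  | cons i l ih =>
    simp only [List.map_cons, List.prod_cons]
    exact (h i List.mem_cons_self).mul_right (ih fun j hj => h j (List.mem_cons_of_mem i hj))

section Anticommute

/-- Two elements anticommute if `a * b = -b * a`. This is phrased through `SemiconjBy` so that the
sign rules for products come from the calculus of semiconjugation. -/
def Anticommute {R : Type*} [Mul R] [Neg R] (a b : R) : Prop :=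
  SemiconjBy a b (-b)

variable {R : Type*} [Monoid R] [HasDistribNeg R] {a b x : R} {l : List R}

theorem Anticommute.symm (h : Anticommute a b) : Anticommute b a := by
  rw [Anticommute, SemiconjBy, neg_mul, h.eq, neg_mul, neg_neg]

theorem semiconjBy_mul_neg_one_pow {m n : ℕ} (ha : SemiconjBy a x ((-1) ^ m * x))
    (hb : SemiconjBy b x ((-1) ^ n * x)) : SemiconjBy (a * b) x ((-1) ^ (m + n) * x) := by
  rw [add_comm m n, pow_add, mul_assoc]
  have ha' : SemiconjBy a ((-1) ^ n * x) ((-1) ^ n * ((-1) ^ m * x)) :=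
    ((Commute.neg_one_right a).pow_right n).semiconjBy.mul_right ha
  exact ha'.mul_left hb

theorem semiconjBy_list_prod_of_anticommute (h : ∀ a ∈ l, Anticommute a x) :
    SemiconjBy l.prod x ((-1) ^ l.length * x) := by
  induction l with
  | nil => simp
  | cons a l ih =>
    have ha : SemiconjBy a x ((-1) ^ 1 * x) := by
      simpa [Anticommute] using h a List.mem_cons_self
    rw [List.prod_cons, List.length_cons, add_comm]
    exact semiconjBy_mul_neg_one_pow ha (ih fun b hb => h b (List.mem_cons_of_mem a hb))

theorem semiconjBy_list_prod_of_mem (hl : l.Pairwise Anticommute) (hx : x ∈ l) :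
    SemiconjBy l.prod x ((-1) ^ (l.length + 1) * x) := by
  obtain ⟨s, t, rfl⟩ := List.append_of_mem hx
  obtain ⟨-, hxt, hsx⟩ := List.pairwise_append.mp hl
  have hs : SemiconjBy s.prod x ((-1) ^ s.length * x) :=
    semiconjBy_list_prod_of_anticommute fun a ha => hsx a ha x List.mem_cons_self
  have hxx : SemiconjBy x x ((-1) ^ 0 * x) := by
    simpa using (Commute.refl x).semiconjBy
  have ht : SemiconjBy t.prod x ((-1) ^ t.length * x) :=
    semiconjBy_list_prod_of_anticommute fun a ha => (List.rel_of_pairwise_cons hxt ha).symm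
  have hsign : (-1 : R) ^ ((s ++ x :: t).length + 1) = (-1) ^ (s.length + (0 + t.length)) := by
    rw [List.length_append, List.length_cons,
      show s.length + (t.length + 1) + 1 = s.length + (0 + t.length) + 2 by omega, pow_add]
    simp
  rw [hsign, List.prod_append, List.prod_cons]
  exact semiconjBy_mul_neg_one_pow hs (semiconjBy_mul_neg_one_pow hxx ht)

theorem list_prod_sq_of_pairwise_anticommute (hl : l.Pairwise Anticommute) :
    l.prod ^ 2 = (-1) ^ l.length.choose 2 * (l.map (· ^ 2)).prod := by
  induction l with
  | nil => simp
  | cons a l ih =>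
    obtain ⟨ha, hl⟩ := List.pairwise_cons.mp hl
    have hswap : l.prod * a = (-1) ^ l.length * a * l.prod :=
      (semiconjBy_list_prod_of_anticommute fun b hb => (ha b hb).symm).eq
    have hsign (m : ℕ) (y : R) : y * (-1) ^ m = (-1) ^ m * y :=
      ((Commute.neg_one_right y).pow_right m).eq
    calc (a :: l).prod ^ 2
        = a * (l.prod * a) * l.prod := by simp only [List.prod_cons, pow_two, mul_assoc]
      _ = (-1) ^ l.length * (a ^ 2 * l.prod ^ 2) := by
          rw [hswap, mul_assoc _ a, ← mul_assoc a, hsign]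
          simp only [pow_two, mul_assoc]
      _ = (-1) ^ (l.length + l.length.choose 2) * (a ^ 2 * (l.map (· ^ 2)).prod) := by
          rw [ih hl, ← mul_assoc (a ^ 2), hsign, pow_add]
          simp only [mul_assoc]
      _ = (-1) ^ (a :: l).length.choose 2 * ((a :: l).map (· ^ 2)).prod := by
          rw [List.length_cons, Nat.choose_succ_succ' l.length 1, Nat.choose_one_right,
            List.map_cons, List.prod_cons]

theorem list_prod_map_neg_one_pow_mul {ι : Type*} (l : List ι) (f : ι → R) (m : ℕ) :
    (l.map fun i => (-1) ^ m * f i).prod = (-1) ^ (m * l.length) * (l.map f).prod := by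
  rcases m.even_or_odd with h | h
  · simp [h.neg_one_pow, pow_mul]
  · simpa [h.neg_one_pow, pow_mul, Function.comp_def] using (l.map f).prod_map_neg

end Anticommute

theorem mul_mul_nonsing_inv_eq_of_semiconjBy {α K : Type*} [Fintype α] [DecidableEq α] [CommRing K]
    {M X Y : Matrix α α K} (hM : IsUnit M) (h : SemiconjBy M X Y) : M * X * M⁻¹ = Y := by
  rw [h.eq, mul_nonsing_inv_cancel_right _ _ (M.isUnit_iff_isUnit_det.mp hM)]

theorem semiconjBy_map_conj_smul {α K : Type*} [Fintype α] [CommSemiring K] [StarRing K]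
    {M X Y : Matrix α α K} (c : K) (h : SemiconjBy M (X.map (starRingEnd K)) Y) :
    SemiconjBy M ((c • X).map (starRingEnd K)) (starRingEnd K c • Y) := by
  rw [Matrix.map_smul' _ _ _ (map_mul _), SemiconjBy, mul_smul_comm, h.eq, smul_mul_assoc]

section Clifford

variable {α : Type*} [Fintype α] [DecidableEq α] {d k : ℕ} {Γ : ℕ → Matrix α α ℂ}

theorem LorentzClifford.anticommute (hΓ : LorentzClifford d Γ) {μ ν : ℕ} (hμ : μ < d) (hν : ν < d)
    (hne : μ ≠ ν) : Anticommute (Γ μ) (Γ ν) := by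
  have h : Γ μ * Γ ν + Γ ν * Γ μ = 0 := by simpa only [if_neg hne] using hΓ μ hμ ν hν
  rw [Anticommute, SemiconjBy, neg_mul]
  exact eq_neg_of_add_eq_zero_left h

theorem LorentzClifford.sq_eq_neg_one (hΓ : LorentzClifford d Γ) {μ : ℕ} (hμ : μ < d)
    (hμ0 : μ ≠ 0) : Γ μ ^ 2 = -1 := by
  have h : (2 : ℂ) • Γ μ ^ 2 = (2 : ℂ) • (-1) := by
    simpa [hμ0, ← two_smul ℂ, pow_two] using hΓ μ hμ μ hμ
  exact smul_right_injective _ two_ne_zero h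

/-- The factors `Γ^1, Γ^3, …, Γ^{2k+1}` of the time-reversal matrix. -/
def timeReversalFactors {R : Type*} (Γ : ℕ → R) (k : ℕ) : List R :=
  List.ofFn fun a : Fin (k + 1) => Γ (2 * (a : ℕ) + 1)

/-- The time-reversal matrix `M_T = Γ^1 Γ^3 ⋯ Γ^{2k+1}`. -/
def timeReversal {R : Type*} [Monoid R] (Γ : ℕ → R) (k : ℕ) : R :=
  (timeReversalFactors Γ k).prod

theorem length_timeReversalFactors {R : Type*} (Γ : ℕ → R) (k : ℕ) :
    (timeReversalFactors Γ k).length = k + 1 :=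
  List.length_ofFn

theorem mem_timeReversalFactors {R : Type*} {Γ : ℕ → R} {k : ℕ} {x : R} :
    x ∈ timeReversalFactors Γ k ↔ ∃ j < 2 * k + 2, Odd j ∧ Γ j = x := by
  rw [timeReversalFactors, List.mem_ofFn]
  constructor
  · rintro ⟨a, rfl⟩
    exact ⟨2 * a + 1, by omega, odd_two_mul_add_one _, rfl⟩
  · rintro ⟨_, hj, ⟨a, rfl⟩, rfl⟩
    exact ⟨⟨a, by omega⟩, rfl⟩

theorem LorentzClifford.pairwise_timeReversalFactors (hΓ : LorentzClifford (2 * k + 2) Γ) :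
    (timeReversalFactors Γ k).Pairwise Anticommute :=
  List.pairwise_ofFn.mpr fun a b hab => hΓ.anticommute (by omega) (by omega) (by omega)

theorem LorentzClifford.semiconjBy_timeReversal_even (hΓ : LorentzClifford (2 * k + 2) Γ) {j : ℕ}
    (hj : j < 2 * k + 2) (heven : Even j) :
    SemiconjBy (timeReversal Γ k) (Γ j) ((-1) ^ (k + 1) * Γ j) := by
  rw [← length_timeReversalFactors Γ k]
  refine semiconjBy_list_prod_of_anticommute fun a ha => ?_
  obtain ⟨i, hi, hodd, rfl⟩ := mem_timeReversalFactors.mp ha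
  exact hΓ.anticommute hi hj (by grind)

theorem LorentzClifford.semiconjBy_timeReversal_odd (hΓ : LorentzClifford (2 * k + 2) Γ) {j : ℕ}
    (hj : j < 2 * k + 2) (hodd : Odd j) :
    SemiconjBy (timeReversal Γ k) (Γ j) ((-1) ^ k * Γ j) := by
  have hsign : (-1 : Matrix α α ℂ) ^ k = (-1) ^ ((timeReversalFactors Γ k).length + 1) := by
    simp [length_timeReversalFactors, pow_succ]
  rw [hsign]
  exact semiconjBy_list_prod_of_mem hΓ.pairwise_timeReversalFactors
    (mem_timeReversalFactors.mpr ⟨j, hj, hodd, rfl⟩)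

theorem LorentzClifford.timeReversal_sq (hΓ : LorentzClifford (2 * k + 2) Γ) :
    timeReversal Γ k ^ 2 = (-1) ^ ((k + 1) * (k + 2) / 2) := by
  have hsq : (timeReversalFactors Γ k).map (· ^ 2) = List.replicate (k + 1) (-1) := by
    rw [List.eq_replicate_iff, List.length_map, length_timeReversalFactors]
    refine ⟨rfl, List.forall_mem_map.mpr fun x hx => ?_⟩
    obtain ⟨j, hj, hodd, rfl⟩ := mem_timeReversalFactors.mp hx
    exact hΓ.sq_eq_neg_one hj hodd.pos.ne'
  have hexp : (k + 1) * (k + 2) / 2 = (k + 1).choose 2 + (k + 1) := by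
    calc (k + 1) * (k + 2) / 2
        = (k + 2).choose 2 := by rw [mul_comm, Nat.choose_two_right, Nat.add_succ_sub_one]
      _ = (k + 1).choose 2 + (k + 1) := by
          rw [Nat.choose_succ_succ' (k + 1) 1, Nat.choose_one_right, add_comm]
  rw [timeReversal, list_prod_sq_of_pairwise_anticommute hΓ.pairwise_timeReversalFactors, hsq,
    List.prod_replicate, length_timeReversalFactors, ← pow_add, hexp]

theorem LorentzClifford.isUnit_timeReversal (hΓ : LorentzClifford (2 * k + 2) Γ) :
    IsUnit (timeReversal Γ k) := by
  rw [← isUnit_pow_iff two_ne_zero, hΓ.timeReversal_sq]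
  exact isUnit_one.neg.pow _

theorem ChiralReality.conj_timeReversal (hreal : ChiralReality (2 * k + 2) Γ) :
    (timeReversal Γ k).map (starRingEnd ℂ) = timeReversal Γ k := by
  change (starRingEnd ℂ).mapMatrix (timeReversal Γ k) = _
  have hfactors : (timeReversalFactors Γ k).map (starRingEnd ℂ).mapMatrix =
      timeReversalFactors Γ k := by
    refine (List.map_congr_left fun x hx => ?_).trans (List.map_id _)
    obtain ⟨j, hj, hodd, rfl⟩ := mem_timeReversalFactors.mp hx
    exact hreal.2.1 j hodd.pos hj (Nat.odd_iff.mp hodd)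
  rw [timeReversal, map_list_prod, hfactors]

theorem semiconjBy_timeReversal_conj_zero (hΓ : LorentzClifford (2 * k + 2) Γ)
    (hreal : ChiralReality (2 * k + 2) Γ) :
    SemiconjBy (timeReversal Γ k) ((Γ 0).map (starRingEnd ℂ)) ((-1) ^ (k + 1) * Γ 0) := by
  rw [hreal.1]
  exact hΓ.semiconjBy_timeReversal_even (by omega) Even.zero

theorem semiconjBy_timeReversal_conj (hΓ : LorentzClifford (2 * k + 2) Γ)
    (hreal : ChiralReality (2 * k + 2) Γ) {j : ℕ} (hj0 : 1 ≤ j) (hj : j < 2 * k + 2) :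
    SemiconjBy (timeReversal Γ k) ((Γ j).map (starRingEnd ℂ)) ((-1) ^ k * Γ j) := by
  rcases j.even_or_odd with heven | hodd
  · rw [hreal.2.2 j hj0 hj (Nat.even_iff.mp heven)]
    simpa [pow_succ] using (hΓ.semiconjBy_timeReversal_even hj heven).neg_right
  · rw [hreal.2.1 j hj0 hj (Nat.odd_iff.mp hodd)]
    exact hΓ.semiconjBy_timeReversal_odd hj hodd

theorem semiconjBy_timeReversal_conj_prod (hΓ : LorentzClifford (2 * k + 2) Γ)
    (hreal : ChiralReality (2 * k + 2) Γ) :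
    SemiconjBy (timeReversal Γ k)
      (((List.range (2 * k + 2)).map Γ).prod.map (starRingEnd ℂ))
      (-((List.range (2 * k + 2)).map Γ).prod) := by
  have htail : SemiconjBy (timeReversal Γ k)
      ((List.range (2 * k + 1)).map fun j => (Γ (j + 1)).map (starRingEnd ℂ)).prod
      ((List.range (2 * k + 1)).map fun j => (-1) ^ k * Γ (j + 1)).prod :=
    semiconjBy_list_prod_map fun j hj =>
      semiconjBy_timeReversal_conj hΓ hreal (by omega) (by have := List.mem_range.mp hj; omega)
  have hconj : ((List.range (2 * k + 2)).map Γ).prod.map (starRingEnd ℂ) =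
      (Γ 0).map (starRingEnd ℂ) *
        ((List.range (2 * k + 1)).map fun j => (Γ (j + 1)).map (starRingEnd ℂ)).prod := by
    change (starRingEnd ℂ).mapMatrix _ = _
    rw [map_list_prod, List.map_map, List.prod_range_succ']
    rfl
  have hsign : -((List.range (2 * k + 2)).map Γ).prod = (-1) ^ (k + 1) * Γ 0 *
      ((List.range (2 * k + 1)).map fun j => (-1) ^ k * Γ (j + 1)).prod := by
    rw [list_prod_map_neg_one_pow_mul, List.length_range, List.prod_range_succ']
    rcases k.even_or_odd with h | h <;>
      simp [h.neg_one_pow, h.add_one.neg_one_pow, pow_mul, pow_succ]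
  rw [hconj, hsign]
  exact (semiconjBy_timeReversal_conj_zero hΓ hreal).mul_right htail

theorem semiconjBy_timeReversal_conj_I_pow_smul_prod (hΓ : LorentzClifford (2 * k + 2) Γ)
    (hreal : ChiralReality (2 * k + 2) Γ) :
    SemiconjBy (timeReversal Γ k)
      ((Complex.I ^ (k + 1) • ((List.range (2 * k + 2)).map Γ).prod).map (starRingEnd ℂ))
      ((-1) ^ k * (Complex.I ^ (k + 1) • ((List.range (2 * k + 2)).map Γ).prod)) := by
  convert semiconjBy_map_conj_smul (Complex.I ^ (k + 1))
    (semiconjBy_timeReversal_conj_prod hΓ hreal) using 1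
  rw [map_pow, Complex.conj_I, neg_pow Complex.I]
  rcases k.even_or_odd with h | h <;> simp [h.neg_one_pow, h.add_one.neg_one_pow]

end Clifford

theorem time_reversal_matrix_k_odd_general {α : Type*} [Fintype α] [DecidableEq α] {k : ℕ}
    {Γ : ℕ → Matrix α α ℂ}
    (hΓ : LorentzClifford (2 * k + 2) Γ) (hreal : ChiralReality (2 * k + 2) Γ)
    (M : Matrix α α ℂ)
    (hM : M = (List.ofFn (fun a : Fin (k + 1) => Γ (2 * (a : ℕ) + 1))).prod) :
    IsUnit M ∧
    M * (Γ 0).map (starRingEnd ℂ) * M⁻¹ = (-1) ^ (k + 1) * Γ 0 ∧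
    (∀ j, 1 ≤ j → j < 2 * k + 2 →
      M * (Γ j).map (starRingEnd ℂ) * M⁻¹ = (-1) ^ k * Γ j) ∧
    M.map (starRingEnd ℂ) * M = ((-1 : ℂ) ^ ((k + 1) * (k + 2) / 2)) • 1 ∧
    (Γ (2 * k + 2) = Complex.I ^ (k + 1) • ((List.range (2 * k + 2)).map Γ).prod →
      M * (Γ (2 * k + 2)).map (starRingEnd ℂ) * M⁻¹ = (-1) ^ k * Γ (2 * k + 2)) := by
  obtain rfl : M = timeReversal Γ k := hM
  have hunit := hΓ.isUnit_timeReversal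
  refine ⟨hunit, ?_, fun j hj0 hj => ?_, ?_, fun hlast => ?_⟩
  · exact mul_mul_nonsing_inv_eq_of_semiconjBy hunit (semiconjBy_timeReversal_conj_zero hΓ hreal)
  · exact mul_mul_nonsing_inv_eq_of_semiconjBy hunit (semiconjBy_timeReversal_conj hΓ hreal hj0 hj)
  · rw [hreal.conj_timeReversal, ← pow_two, hΓ.timeReversal_sq, ← Algebra.algebraMap_eq_smul_one,
      map_pow, map_neg, map_one]
  · rw [hlast]
    exact mul_mul_nonsing_inv_eq_of_semiconjBy hunit
      (semiconjBy_timeReversal_conj_I_pow_smul_prod hΓ hreal)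

/-- For odd `k`, the time-reversal matrix `M_T = Γ^1 Γ^3 ⋯ Γ^{2k+1}` is invertible,
satisfies `M_T conj(Γ^0) M_T⁻¹ = Γ^0` and `M_T conj(Γ^j) M_T⁻¹ = -Γ^j` for
`1 ≤ j ≤ 2k+1`, and `conj(M_T) · M_T = (-1)^{(k+1)(k+2)/2} I` (computing `T²` on a
Dirac fermion).  Moreover, if `Γ^{2k+2} = i^{k+1} Γ^0 ⋯ Γ^{2k+1}` is appended (the
odd-dimensional case `d = 2k+3`), then also `M_T conj(Γ^{2k+2}) M_T⁻¹ = -Γ^{2k+2}`. -/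
theorem time_reversal_matrix_k_odd {n k : ℕ} (hk : Odd k)
    (Γ : ℕ → Matrix (Fin n) (Fin n) ℂ)
    (hΓ : LorentzClifford (2 * k + 2) Γ)
    (hreal : ChiralReality (2 * k + 2) Γ)
    (M : Matrix (Fin n) (Fin n) ℂ)
    (hM : M = (List.ofFn (fun a : Fin (k + 1) => Γ (2 * (a : ℕ) + 1))).prod) :
    IsUnit M ∧
    M * (Γ 0).map (starRingEnd ℂ) * M⁻¹ = Γ 0 ∧
    (∀ j, 1 ≤ j → j < 2 * k + 2 → M * (Γ j).map (starRingEnd ℂ) * M⁻¹ = -(Γ j)) ∧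
    M.map (starRingEnd ℂ) * M = ((-1 : ℂ) ^ ((k + 1) * (k + 2) / 2)) • 1 ∧
    (Γ (2 * k + 2) = Complex.I ^ (k + 1) • ((List.range (2 * k + 2)).map Γ).prod →
      M * (Γ (2 * k + 2)).map (starRingEnd ℂ) * M⁻¹ = -(Γ (2 * k + 2))) := by
  simpa [hk.neg_one_pow, hk.add_one.neg_one_pow] using
    time_reversal_matrix_k_odd_general hΓ hreal M hM
end
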